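/- arXiv:1104.4742 — 11 statements merged into one kernel-verified Lean document; each statement's English description precedes it below -/
import Mathlib

section
/- For all real t ≥ 0, λ > 0, β ≥ 0 and real numbers μℓ, μs, one has ∫₀ᵗ λ·exp(−λv)·((1−exp(−βv))·μℓ + exp(−βv)·μs)·(λ(t−v)+1) dv = μℓ·(λt − 𝔄(t,λ,β)) + μs·𝔄(t,λ,β). -/
open MeasureTheory Real

/-- The quantity 𝔄(t,λ,β) from the paper. -/
noncomputable def frakA (t lam β : ℝ) : ℝ :=
  (lam / (β + lam) ^ 2) * (β - β * Real.exp (-((β + lam) * t)) + (β + lam) * lam * t)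

lemma hasDerivAt_aux (t lam c v : ℝ) (hc : c ≠ 0) :
    HasDerivAt (fun v : ℝ => -(lam * Real.exp (-(c * v)) * ((lam * (t - v) + 1) / c - lam / c ^ 2)))
      (lam * Real.exp (-(c * v)) * (lam * (t - v) + 1)) v := by
  have h1 : HasDerivAt (fun v : ℝ => Real.exp (-(c * v))) (Real.exp (-(c * v)) * (-(c * 1))) v :=
    (((hasDerivAt_id v).const_mul c).neg).exp
  have h2 : HasDerivAt (fun v : ℝ => (lam * (t - v) + 1) / c - lam / c ^ 2)
      ((lam * (-1)) / c) v :=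
    ((((((hasDerivAt_id v).const_sub t).const_mul lam).add_const 1).div_const c).sub_const _)
  refine HasDerivAt.congr_deriv ((h1.const_mul lam).mul h2).neg ?_
  field_simp
  ring

theorem stmt_1 (t lam β μl μs : ℝ) (ht : 0 ≤ t) (hlam : 0 < lam) (hβ : 0 ≤ β) :
    ∫ v in (0:ℝ)..t,
        lam * Real.exp (-(lam * v)) *
          ((1 - Real.exp (-(β * v))) * μl + Real.exp (-(β * v)) * μs) *
          (lam * (t - v) + 1)
      = μl * (lam * t - frakA t lam β) + μs * frakA t lam β := by
  have hc : β + lam ≠ 0 := by positivity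
  have hl : lam ≠ 0 := hlam.ne'
  rw [intervalIntegral.integral_eq_sub_of_hasDerivAt (f := fun v =>
    μl * (-(lam * Real.exp (-(lam * v)) * ((lam * (t - v) + 1) / lam - lam / lam ^ 2))) +
    (μs - μl) * (-(lam * Real.exp (-((β + lam) * v)) *
      ((lam * (t - v) + 1) / (β + lam) - lam / (β + lam) ^ 2))))]
  · simp only [frakA, mul_zero, neg_zero, Real.exp_zero, sub_self]
    field_simp
    ring
  · intro v _
    refine HasDerivAt.congr_deriv (((hasDerivAt_aux t lam lam v hl).const_mul μl).add
      ((hasDerivAt_aux t lam (β + lam) v hc).const_mul (μs - μl))) ?_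
    have h : Real.exp (-((β + lam) * v)) = Real.exp (-(lam * v)) * Real.exp (-(β * v)) := by
      rw [← Real.exp_add]; congr 1; ring
    rw [h]
    ring
  · exact Continuous.intervalIntegrable (by fun_prop) _ _
end

section
/- Let L be a Borel probability measure on (0,∞) with ∫ λ dL(λ) < ∞, let β ≥ 0, and let μℓ, μs ≥ 0 be real numbers. Then the limit as t → ∞ of (1/t)·( μℓ·∫ (λt − 𝔄(t,λ,β)) dL(λ) + μs·∫ 𝔄(t,λ,β) dL(λ) ) exists and equals μℓ·∫ (β/(β+λ))·λ dL(λ) + μs·∫ (λ/(β+λ))·λ dL(λ). -/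
open MeasureTheory Real Filter

theorem frakA_bounds {t lam β : ℝ} (ht : 0 < t) (hl : 0 < lam) (hβ : 0 ≤ β) :
    0 ≤ frakA t lam β ∧ frakA t lam β ≤ lam * t := by
  have hs : 0 < β + lam := by linarith
  have h1 : Real.exp (-((β + lam) * t)) ≤ 1 := by
    apply Real.exp_le_one_iff.mpr
    have := mul_pos hs ht
    linarith
  have h2 : 1 - (β + lam) * t ≤ Real.exp (-((β + lam) * t)) := by
    have := Real.add_one_le_exp (-((β + lam) * t))
    linarith
  unfold frakA
  constructor
  · have h3 : 0 ≤ β - β * Real.exp (-((β + lam) * t)) := by nlinarith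
    positivity
  · have h3 : β - β * Real.exp (-((β + lam) * t)) + (β + lam) * lam * t
        ≤ (β + lam) ^ 2 * t := by nlinarith
    calc _ ≤ (lam / (β + lam) ^ 2) * ((β + lam) ^ 2 * t) :=
          mul_le_mul_of_nonneg_left h3 (by positivity)
      _ = lam * t := by field_simp

theorem frakA_tendsto {lam β : ℝ} (hl : 0 < lam) (hβ : 0 ≤ β) :
    Tendsto (fun t : ℝ => (1 / t) * frakA t lam β) atTop
      (nhds ((lam / (β + lam)) * lam)) := by
  have hs : 0 < β + lam := by linarith
  have hexp : Tendsto (fun t : ℝ => Real.exp (-((β + lam) * t))) atTop (nhds 0) :=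
    Real.tendsto_exp_neg_atTop_nhds_zero.comp (tendsto_id.const_mul_atTop hs)
  have h0 := (tendsto_inv_atTop_zero (𝕜 := ℝ)).mul
    ((hexp.const_mul β).const_sub β)
  have h1 := (h0.add_const ((β + lam) * lam)).const_mul (lam / (β + lam) ^ 2)
  have e : lam / (β + lam) ^ 2 * (0 * (β - β * 0) + (β + lam) * lam)
      = (lam / (β + lam)) * lam := by field_simp; ring
  rw [e] at h1
  refine h1.congr' ?_
  filter_upwards [eventually_gt_atTop 0] with t ht
  unfold frakA
  field_simp

theorem stmt_3 (L : Measure ℝ) [IsProbabilityMeasure L] (hsupp : L (Set.Iic 0) = 0)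
    (hint : Integrable (fun lam : ℝ => lam) L)
    (β μl μs : ℝ) (hβ : 0 ≤ β) (hμl : 0 ≤ μl) (hμs : 0 ≤ μs) :
    Tendsto
      (fun t : ℝ =>
        (1 / t) *
          (μl * ∫ lam, (lam * t - frakA t lam β) ∂L + μs * ∫ lam, frakA t lam β ∂L))
      atTop
      (nhds
        (μl * ∫ lam, (β / (β + lam)) * lam ∂L + μs * ∫ lam, (lam / (β + lam)) * lam ∂L)) := by
  have hpos : ∀ᵐ lam ∂L, 0 < lam := by
    rw [ae_iff]
    convert hsupp using 2
    ext x
    simp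
  have hmeas : ∀ t, AEStronglyMeasurable (fun lam => frakA t lam β) L := by
    intro t
    apply Measurable.aestronglyMeasurable
    unfold frakA
    fun_prop
  have hA : ∀ t, 0 < t → Integrable (fun lam => frakA t lam β) L := by
    intro t ht
    refine (hint.mul_const t).mono' (hmeas t) ?_
    filter_upwards [hpos] with lam hl
    have := frakA_bounds ht hl hβ
    rw [Real.norm_of_nonneg this.1]
    exact this.2
  have hG : Integrable (fun lam : ℝ => (lam / (β + lam)) * lam) L := by
    refine hint.mono' (Measurable.aestronglyMeasurable (by fun_prop)) ?_
    filter_upwards [hpos] with lam hl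
    have hs : 0 < β + lam := by linarith
    rw [Real.norm_of_nonneg (by positivity)]
    have : lam / (β + lam) ≤ 1 := by rw [div_le_one hs]; linarith
    nlinarith
  have hF : Tendsto (fun t : ℝ => ∫ lam, (1 / t) * frakA t lam β ∂L) atTop
      (nhds (∫ lam, (lam / (β + lam)) * lam ∂L)) := by
    refine tendsto_integral_filter_of_dominated_convergence (fun lam => lam) ?_ ?_ hint ?_
    · exact Eventually.of_forall fun t => (hmeas t).const_mul _
    · filter_upwards [eventually_gt_atTop 0] with t ht
      filter_upwards [hpos] with lam hl
      have := frakA_bounds ht hl hβ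
      rw [Real.norm_of_nonneg (mul_nonneg (by positivity) this.1), one_div,
        inv_mul_le_iff₀ ht]
      linarith [this.2]
    · filter_upwards [hpos] with lam hl
      exact frakA_tendsto hl hβ
  have hB : ∫ lam, (β / (β + lam)) * lam ∂L
      = ∫ lam, lam ∂L - ∫ lam, (lam / (β + lam)) * lam ∂L := by
    rw [← integral_sub hint hG]
    apply integral_congr_ae
    filter_upwards [hpos] with lam hl
    have hs : 0 < β + lam := by linarith
    field_simp
    ring
  rw [hB]
  refine (((hF.const_sub (∫ lam, lam ∂L)).const_mul μl).add (hF.const_mul μs)).congr' ?_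
  filter_upwards [eventually_gt_atTop 0] with t ht
  rw [integral_sub (hint.mul_const t) (hA t ht), integral_const_mul, integral_mul_const]
  field_simp
end

section
/- For all real t ≥ 0, λ > 0 and β ≥ 0, one has 𝔅(t,λ,β,β) = 2βλ²(β−2λ)/(β+λ)⁴ + 4tβλ³/(β+λ)³ + t²λ⁴/(β+λ)² − (2βλ²·(−2λ + β·(1 + t(β+λ)))/(β+λ)⁴)·exp(−t(β+λ)). -/
open MeasureTheory Real

/-- The quantity 𝔅(t,λ,Θ,Δ) from the paper. -/
noncomputable def frakB (t lam Θ Δ : ℝ) : ℝ :=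
  lam ^ 2 *
    ∫ y in (0:ℝ)..t,
      Real.exp (-((lam + Θ) * y)) *
        ∫ v in (0:ℝ)..(t - y),
          Real.exp (-((lam + Δ) * v)) * ((lam * (t - y - v) + 2) ^ 2 - 2)

lemma hasDerivAt_expn (a y : ℝ) :
    HasDerivAt (fun y : ℝ => Real.exp (-(a * y))) (Real.exp (-(a * y)) * (-(a * 1))) y :=
  (((hasDerivAt_id y).const_mul a).neg).exp

lemma inner_int (a l T : ℝ) (ha : a ≠ 0) :
    ∫ v in (0:ℝ)..T, Real.exp (-(a * v)) * ((l * (T - v) + 2) ^ 2 - 2)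
      = (((l * T + 2) ^ 2 - 2) / a - 2 * l * (l * T + 2) / a ^ 2 + 2 * l ^ 2 / a ^ 3)
        - Real.exp (-(a * T)) * (2 / a - 4 * l / a ^ 2 + 2 * l ^ 2 / a ^ 3) := by
  have key := intervalIntegral.integral_eq_sub_of_hasDerivAt (a := 0) (b := T)
    (f := fun v => Real.exp (-(a * v)) * (-(((l * (T - v) + 2) ^ 2 - 2) / a
      - 2 * l * (l * (T - v) + 2) / a ^ 2 + 2 * l ^ 2 / a ^ 3)))
    (f' := fun v => Real.exp (-(a * v)) * ((l * (T - v) + 2) ^ 2 - 2)) ?_ ?_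
  · rw [key]
    simp
    ring
  · intro v _
    have hL : HasDerivAt (fun v : ℝ => l * (T - v) + 2) (l * (-1)) v :=
      (((hasDerivAt_id v).const_sub T).const_mul l).add_const 2
    have h := (hasDerivAt_expn a v).mul
      ((((((hL.pow 2).sub_const 2).div_const a).sub
        ((hL.const_mul (2 * l)).div_const (a ^ 2))).add_const (2 * l ^ 2 / a ^ 3)).neg)
    refine h.congr_deriv ?_
    simp
    field_simp
    ring
  · apply Continuous.intervalIntegrable
    fun_prop

lemma outer_int (a l t C : ℝ) (ha : a ≠ 0) :
    ∫ y in (0:ℝ)..t, (Real.exp (-(a * y)) * (((l * (t - y) + 2) ^ 2 - 2) / a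
        - 2 * l * (l * (t - y) + 2) / a ^ 2 + 2 * l ^ 2 / a ^ 3) - C)
      = (((l * t + 2) ^ 2 - 2) / a ^ 2 - 4 * l * (l * t + 2) / a ^ 3 + 6 * l ^ 2 / a ^ 4)
        - Real.exp (-(a * t)) * (2 / a ^ 2 - 8 * l / a ^ 3 + 6 * l ^ 2 / a ^ 4) - C * t := by
  have key := intervalIntegral.integral_eq_sub_of_hasDerivAt (a := 0) (b := t)
    (f := fun y => Real.exp (-(a * y)) * (-(((l * (t - y) + 2) ^ 2 - 2) / a ^ 2
      - 4 * l * (l * (t - y) + 2) / a ^ 3 + 6 * l ^ 2 / a ^ 4)) - C * y)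
    (f' := fun y => Real.exp (-(a * y)) * (((l * (t - y) + 2) ^ 2 - 2) / a
        - 2 * l * (l * (t - y) + 2) / a ^ 2 + 2 * l ^ 2 / a ^ 3) - C) ?_ ?_
  · rw [key]
    simp
    ring
  · intro v _
    have hL : HasDerivAt (fun v : ℝ => l * (t - v) + 2) (l * (-1)) v :=
      (((hasDerivAt_id v).const_sub t).const_mul l).add_const 2
    have h := ((hasDerivAt_expn a v).mul
      ((((((hL.pow 2).sub_const 2).div_const (a ^ 2)).sub
        ((hL.const_mul (4 * l)).div_const (a ^ 3))).add_const (6 * l ^ 2 / a ^ 4)).neg)).sub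
        ((hasDerivAt_id v).const_mul C)
    refine h.congr_deriv ?_
    simp
    field_simp
    ring
  · apply Continuous.intervalIntegrable
    fun_prop

theorem stmt_5 (t lam β : ℝ) (ht : 0 ≤ t) (hlam : 0 < lam) (hβ : 0 ≤ β) :
    frakB t lam β β
      = 2 * β * lam ^ 2 * (β - 2 * lam) / (β + lam) ^ 4
        + 4 * t * β * lam ^ 3 / (β + lam) ^ 3
        + t ^ 2 * lam ^ 4 / (β + lam) ^ 2
        - (2 * β * lam ^ 2 * (-(2 * lam) + β * (1 + t * (β + lam))) / (β + lam) ^ 4) *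
            Real.exp (-(t * (β + lam))) := by
  obtain ⟨a, rfl⟩ : ∃ a, β = a - lam := ⟨β + lam, by ring⟩
  have ha : a ≠ 0 := by
    have : 0 < a := by linarith
    exact this.ne'
  unfold frakB
  simp only [add_sub_cancel, sub_add_cancel]
  have e : ∀ y : ℝ, Real.exp (-(a * y)) *
        (∫ v in (0:ℝ)..(t - y), Real.exp (-(a * v)) * ((lam * (t - y - v) + 2) ^ 2 - 2))
      = Real.exp (-(a * y)) * (((lam * (t - y) + 2) ^ 2 - 2) / a
        - 2 * lam * (lam * (t - y) + 2) / a ^ 2 + 2 * lam ^ 2 / a ^ 3)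
        - Real.exp (-(a * t)) * (2 / a - 4 * lam / a ^ 2 + 2 * lam ^ 2 / a ^ 3) := by
    intro y
    rw [inner_int a lam (t - y) ha]
    have : Real.exp (-(a * t)) = Real.exp (-(a * y)) * Real.exp (-(a * (t - y))) := by
      rw [← Real.exp_add]
      ring_nf
    rw [this]
    ring
  simp only [e]
  rw [outer_int a lam t _ ha, mul_comm t a]
  field_simp
  ring
end

section
/- For all real t ≥ 0, λ > 0 and β ≥ 0, one has 𝔅(t,λ,0,β) = −2βλ²/(β+λ)³ + 2tβλ²/(β+λ)² + t²λ³/(β+λ) + (2βλ²/(β+λ)³)·exp(−t(β+λ)). -/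
open MeasureTheory Real

theorem inner_aux (s l a : ℝ) (ha : a ≠ 0) :
    ∫ v in (0:ℝ)..s, Real.exp (-(a * v)) * ((l * (s - v) + 2) ^ 2 - 2)
      = Real.exp (-(a * s)) * (-2 * (a - l) ^ 2 / a ^ 3)
        - (-l ^ 2 / a * s ^ 2 + (-4 * l / a + 2 * l ^ 2 / a ^ 2) * s
            + -2 * (a - l) ^ 2 / a ^ 3) := by
  have h : ∀ v ∈ Set.uIcc 0 s, HasDerivAt (fun v : ℝ => Real.exp (-(a * v)) *
      (-l ^ 2 / a * (s - v) ^ 2 + (-4 * l / a + 2 * l ^ 2 / a ^ 2) * (s - v)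
            + -2 * (a - l) ^ 2 / a ^ 3))
      (Real.exp (-(a * v)) * ((l * (s - v) + 2) ^ 2 - 2)) v := by
    intro v _
    have h1 : HasDerivAt (fun v : ℝ => Real.exp (-(a * v)))
        (Real.exp (-(a * v)) * (-(a * 1))) v := ((hasDerivAt_id v).const_mul a).neg.exp
    have h2 : HasDerivAt (fun v : ℝ => s - v) (-1) v := (hasDerivAt_id v).const_sub s
    have h3 := h1.mul ((((h2.pow 2).const_mul (-l ^ 2 / a)).add
      (h2.const_mul (-4 * l / a + 2 * l ^ 2 / a ^ 2))).add_const (-2 * (a - l) ^ 2 / a ^ 3))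
    refine h3.congr_deriv ?_
    simp only [Pi.add_apply, Pi.pow_apply]
    field_simp
    push_cast
    ring
  rw [intervalIntegral.integral_eq_sub_of_hasDerivAt h
    (Continuous.intervalIntegrable (by fun_prop) _ _)]
  simp

theorem outer_aux (t l β : ℝ) (hl : l ≠ 0) (ha : l + β ≠ 0) :
    ∫ y in (0:ℝ)..t, Real.exp (-(l * y)) *
      (Real.exp (-((l + β) * (t - y))) * (-2 * ((l + β) - l) ^ 2 / (l + β) ^ 3)
        - (-l ^ 2 / (l + β) * (t - y) ^ 2
            + (-4 * l / (l + β) + 2 * l ^ 2 / (l + β) ^ 2) * (t - y)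
            + -2 * ((l + β) - l) ^ 2 / (l + β) ^ 3))
      = l / (l + β) * t ^ 2 + 2 * β / (l + β) ^ 2 * t - 2 * β / (l + β) ^ 3
        + 2 * β / (l + β) ^ 3 * Real.exp (-((l + β) * t)) := by
  have h : ∀ y ∈ Set.uIcc 0 t, HasDerivAt (fun y : ℝ => Real.exp (-(l * y)) *
      ((-l / (l + β) * (t - y) ^ 2 + (-2 * β / (l + β) ^ 2) * (t - y)
            + 2 * β / (l + β) ^ 3) - Real.exp (-((l + β) * (t - y))) * (2 * β / (l + β) ^ 3)))
      (Real.exp (-(l * y)) *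
      (Real.exp (-((l + β) * (t - y))) * (-2 * ((l + β) - l) ^ 2 / (l + β) ^ 3)
        - (-l ^ 2 / (l + β) * (t - y) ^ 2
            + (-4 * l / (l + β) + 2 * l ^ 2 / (l + β) ^ 2) * (t - y)
            + -2 * ((l + β) - l) ^ 2 / (l + β) ^ 3))) y := by
    intro y _
    have h1 : HasDerivAt (fun v : ℝ => Real.exp (-(l * v)))
        (Real.exp (-(l * y)) * (-(l * 1))) y := ((hasDerivAt_id y).const_mul l).neg.exp
    have h2 : HasDerivAt (fun v : ℝ => t - v) (-1) y := (hasDerivAt_id y).const_sub t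
    have h4 : HasDerivAt (fun v : ℝ => Real.exp (-((l + β) * (t - v))))
        (Real.exp (-((l + β) * (t - y))) * (-((l + β) * (-1)))) y :=
      (h2.const_mul (l + β)).neg.exp
    have h3 := h1.mul (((((h2.pow 2).const_mul (-l / (l + β))).add
      (h2.const_mul (-2 * β / (l + β) ^ 2))).add_const (2 * β / (l + β) ^ 3)).sub
      (h4.mul_const (2 * β / (l + β) ^ 3)))
    refine h3.congr_deriv ?_
    simp only [Pi.add_apply, Pi.pow_apply, Pi.sub_apply]
    generalize Real.exp (-((l + β) * (t - y))) = E
    generalize Real.exp (-(l * y)) = F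
    field_simp
    push_cast
    ring
  rw [intervalIntegral.integral_eq_sub_of_hasDerivAt h
    (Continuous.intervalIntegrable (by fun_prop) _ _)]
  simp
  ring

theorem stmt_6 (t lam β : ℝ) (ht : 0 ≤ t) (hlam : 0 < lam) (hβ : 0 ≤ β) :
    frakB t lam 0 β
      = -(2 * β * lam ^ 2 / (β + lam) ^ 3)
        + 2 * t * β * lam ^ 2 / (β + lam) ^ 2
        + t ^ 2 * lam ^ 3 / (β + lam)
        + (2 * β * lam ^ 2 / (β + lam) ^ 3) * Real.exp (-(t * (β + lam))) := by
  have ha : lam + β ≠ 0 := by positivity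
  unfold frakB
  simp only [add_zero, inner_aux _ lam (lam + β) ha]
  rw [outer_aux t lam β hlam.ne' ha, add_comm β lam, mul_comm t (lam + β)]
  ring
end

section
/- For all real t ≥ 0, λ ∈ ℝ, Θ ∈ ℝ and Δ ∈ ℝ, one has 𝔅(t,λ,Θ,Δ) = 𝔅(t,λ,Δ,Θ). -/
open MeasureTheory Real

theorem frakB_aux (t : ℝ) (ht : 0 ≤ t) (f : ℝ → ℝ → ℝ) :
    (∫ y in (0:ℝ)..t, ∫ v in (0:ℝ)..(t - y), f y v) =
    ∫ y in Set.Ioc 0 t, ∫ v in Set.Ioc 0 t,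
      ({p : ℝ × ℝ | p.1 + p.2 ≤ t}.indicator (fun p => f p.1 p.2)) (y, v) := by
  rw [intervalIntegral.integral_of_le ht]
  refine setIntegral_congr_fun measurableSet_Ioc ?_
  intro y hy
  have hy1 : 0 < y := hy.1
  have hy2 : y ≤ t := hy.2
  have h1 : ∀ v, ({p : ℝ × ℝ | p.1 + p.2 ≤ t}.indicator (fun p => f p.1 p.2)) (y, v)
      = (Set.Iic (t - y)).indicator (f y) v := by
    intro v
    by_cases h : y + v ≤ t
    · rw [Set.indicator_of_mem (by exact h),
        Set.indicator_of_mem (by simp only [Set.mem_Iic]; linarith)]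
    · rw [Set.indicator_of_notMem (by exact h),
        Set.indicator_of_notMem (by simp only [Set.mem_Iic]; intro h'; apply h; linarith)]
  simp only [h1]
  rw [intervalIntegral.integral_of_le (by linarith), setIntegral_indicator measurableSet_Iic]
  congr 2
  ext v
  simp only [Set.mem_inter_iff, Set.mem_Ioc, Set.mem_Iic]
  constructor
  · rintro ⟨a, b⟩; exact ⟨⟨a, by linarith⟩, b⟩
  · rintro ⟨⟨a, _⟩, b⟩; exact ⟨a, b⟩

theorem frakB_swap (t : ℝ) (ht : 0 ≤ t) (f : ℝ → ℝ → ℝ)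
    (hf : Continuous (fun p : ℝ × ℝ => f p.1 p.2)) :
    (∫ y in (0:ℝ)..t, ∫ v in (0:ℝ)..(t - y), f y v) =
    ∫ y in (0:ℝ)..t, ∫ v in (0:ℝ)..(t - y), f v y := by
  rw [frakB_aux t ht, frakB_aux t ht (fun y v => f v y)]
  rw [integral_integral_swap]
  · congr 1
    ext v
    congr 1
    ext y
    simp only [Set.indicator, Set.mem_ofPred_eq, add_comm]
  · have hm : MeasurableSet {p : ℝ × ℝ | p.1 + p.2 ≤ t} :=
      measurableSet_le (by fun_prop) (by fun_prop)
    have : IntegrableOn (fun p : ℝ × ℝ => f p.1 p.2) (Set.Ioc 0 t ×ˢ Set.Ioc 0 t)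
        (volume.prod volume) := by
      refine IntegrableOn.mono_set (t := Set.Icc 0 t ×ˢ Set.Icc 0 t) ?_
        (Set.prod_mono Set.Ioc_subset_Icc_self Set.Ioc_subset_Icc_self)
      exact hf.continuousOn.integrableOn_compact (isCompact_Icc.prod isCompact_Icc)
    rw [Measure.prod_restrict]
    exact this.indicator hm

theorem stmt_8 (t lam Θ Δ : ℝ) (ht : 0 ≤ t) :
    frakB t lam Θ Δ = frakB t lam Δ Θ := by
  unfold frakB
  congr 1
  simp only [← intervalIntegral.integral_const_mul]
  rw [frakB_swap t ht _ (by fun_prop)]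
  congr 1
  ext y
  congr 1
  ext v
  ring_nf
end

section
/- For all real λ > 0 and β ≥ 0, the quantity 𝔅(t,λ,β,β)/t − t·λ⁴/(β+λ)² tends to 4βλ³/(β+λ)³ as t → ∞. -/
open MeasureTheory Real Filter

lemma conv_quad (a A B C s : ℝ) :
    ∫ v in (0:ℝ)..s, Real.exp (-(a * v)) *
      ((a * A) * (s - v) ^ 2 + (2 * A + a * B) * (s - v) + (B + a * C)) =
      (A * s ^ 2 + B * s + C) - C * Real.exp (-(a * s)) := by
  rw [intervalIntegral.integral_eq_sub_of_hasDerivAt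
    (f := fun v => -(Real.exp (-(a * v)) * (A * (s - v) ^ 2 + B * (s - v) + C)))]
  · simp; ring
  · intro v _
    have h1 : HasDerivAt (fun v : ℝ => Real.exp (-(a * v))) (Real.exp (-(a * v)) * (-(a * 1))) v :=
      (((hasDerivAt_id v).const_mul a).neg).exp
    have h2 : HasDerivAt (fun v : ℝ => s - v) (-1) v := (hasDerivAt_id v).const_sub s
    have h3 := (h1.mul ((((h2.pow 2).const_mul A).add (h2.const_mul B)).add_const C)).neg
    refine h3.congr_deriv ?_
    simp
    ring
  · exact Continuous.intervalIntegrable (by fun_prop) _ _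

lemma frakB_eq (t lam a β : ℝ) (A B C D E F : ℝ) (ha : lam + β = a)
    (hA : a * A = lam ^ 2) (hB : 2 * A + a * B = 4 * lam) (hC : B + a * C = 2)
    (hD : a * D = A) (hE : 2 * D + a * E = B) (hF : E + a * F = C) :
    frakB t lam β β = lam ^ 2 * (D * t ^ 2 + E * t + F - F * Real.exp (-(a * t))
      - C * t * Real.exp (-(a * t))) := by
  unfold frakB
  rw [ha]
  have h1 : ∀ s : ℝ, ∫ v in (0:ℝ)..s, Real.exp (-(a * v)) * ((lam * (s - v) + 2) ^ 2 - 2) =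
      (A * s ^ 2 + B * s + C) - C * Real.exp (-(a * s)) := by
    intro s
    rw [← conv_quad, hA, hB, hC]
    congr 1
    ext v
    ring
  simp only [h1]
  congr 1
  have h2 := conv_quad a D E F t
  rw [hD, hE, hF] at h2
  have h3 : ∀ y : ℝ, Real.exp (-(a * y)) *
      ((A * (t - y) ^ 2 + B * (t - y) + C) - C * Real.exp (-(a * (t - y)))) =
      Real.exp (-(a * y)) * (A * (t - y) ^ 2 + B * (t - y) + C) - C * Real.exp (-(a * t)) := by
    intro y
    have : Real.exp (-(a * t)) = Real.exp (-(a * y)) * Real.exp (-(a * (t - y))) := by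
      rw [← Real.exp_add]; congr 1; ring
    rw [this]; ring
  simp only [h3]
  rw [intervalIntegral.integral_sub (Continuous.intervalIntegrable (by fun_prop) _ _)
    (Continuous.intervalIntegrable (by fun_prop) _ _), h2, intervalIntegral.integral_const]
  simp
  ring

theorem stmt_9 (lam β : ℝ) (hlam : 0 < lam) (hβ : 0 ≤ β) :
    Tendsto (fun t : ℝ => frakB t lam β β / t - t * lam ^ 4 / (β + lam) ^ 2) atTop
      (nhds (4 * β * lam ^ 3 / (β + lam) ^ 3)) := by
  obtain ⟨a, ha⟩ : ∃ a, lam + β = a := ⟨_, rfl⟩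
  have hpos : 0 < a := by rw [← ha]; positivity
  have hne : a ≠ 0 := hpos.ne'
  obtain ⟨A, hA⟩ : ∃ A, a * A = lam ^ 2 := ⟨lam ^ 2 / a, by field_simp⟩
  obtain ⟨B, hB⟩ : ∃ B, 2 * A + a * B = 4 * lam := ⟨(4 * lam - 2 * A) / a, by field_simp; ring⟩
  obtain ⟨C, hC⟩ : ∃ C, B + a * C = 2 := ⟨(2 - B) / a, by field_simp; ring⟩
  obtain ⟨D, hD⟩ : ∃ D, a * D = A := ⟨A / a, by field_simp⟩
  obtain ⟨E, hE⟩ : ∃ E, 2 * D + a * E = B := ⟨(B - 2 * D) / a, by field_simp; ring⟩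
  obtain ⟨F, hF⟩ : ∃ F, E + a * F = C := ⟨(C - E) / a, by field_simp; ring⟩
  have hexp : Tendsto (fun t : ℝ => Real.exp (-(a * t))) atTop (nhds 0) :=
    Real.tendsto_exp_neg_atTop_nhds_zero.comp (tendsto_id.const_mul_atTop hpos)
  have hinv : Tendsto (fun t : ℝ => t⁻¹) atTop (nhds 0) := tendsto_inv_atTop_zero
  have hlim : Tendsto (fun t : ℝ => lam ^ 2 * (E + F * t⁻¹ - F * (Real.exp (-(a * t)) * t⁻¹)
      - C * Real.exp (-(a * t)))) atTop
      (nhds (lam ^ 2 * (E + F * 0 - F * (0 * 0) - C * 0))) :=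
    ((((hinv.const_mul F).const_add E).sub ((hexp.mul hinv).const_mul F)).sub
      (hexp.const_mul C)).const_mul _
  have hβa : β + lam = a := by rw [add_comm]; exact ha
  have hDv : D = lam ^ 2 / a ^ 2 := by
    rw [eq_div_iff (by positivity)]; linear_combination a * hD + hA
  have hEv : lam ^ 2 * E = 4 * β * lam ^ 3 / a ^ 3 := by
    rw [eq_div_iff (by positivity)]
    linear_combination lam ^ 2 * (a ^ 2 * hE + a * hB - 2 * a * hD - 4 * hA) - 4 * lam ^ 3 * ha
  have hval : lam ^ 2 * (E + F * 0 - F * (0 * 0) - C * 0) = 4 * β * lam ^ 3 / (β + lam) ^ 3 := by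
    rw [hβa, ← hEv]; ring
  rw [hval] at hlim
  refine hlim.congr' ?_
  filter_upwards [eventually_gt_atTop 0] with t ht
  rw [frakB_eq t lam a β A B C D E F ha hA hB hC hD hE hF, hβa, hDv]
  field_simp
  ring
end

section
/- For all real λ > 0 and β ≥ 0, the quantity 𝔅(t,λ,0,β)/t − t·λ³/(β+λ) tends to 2βλ²/(β+λ)² as t → ∞. -/
open MeasureTheory Real Filter

lemma int_aux (k A B C T : ℝ) :
    ∫ v in (0:ℝ)..T, Real.exp (-(k * v)) *
      (k * A * (T - v) ^ 2 + (k * B + 2 * A) * (T - v) + (k * C + B)) =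
    A * T ^ 2 + B * T + C - C * Real.exp (-(k * T)) := by
  have hd : ∀ v ∈ Set.uIcc (0:ℝ) T, HasDerivAt
      (fun v => -(Real.exp (-(k * v)) * (A * (T - v) ^ 2 + B * (T - v) + C)))
      (Real.exp (-(k * v)) *
      (k * A * (T - v) ^ 2 + (k * B + 2 * A) * (T - v) + (k * C + B))) v := by
    intro v _
    have h1 : HasDerivAt (fun v : ℝ => T - v) (-1) v := by
      simpa using (hasDerivAt_id v).const_sub T
    have h2 : HasDerivAt (fun v : ℝ => -(k * v)) (-(k * 1)) v :=
      ((hasDerivAt_id v).const_mul k).neg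
    have h3 := (h2.exp.mul ((((h1.pow 2).const_mul A).add (h1.const_mul B)).add_const C)).neg
    refine h3.congr_deriv ?_
    simp
    ring
  rw [intervalIntegral.integral_eq_sub_of_hasDerivAt hd
    (Continuous.intervalIntegrable (by fun_prop) _ _)]
  simp
  ring

theorem stmt_10 (lam β : ℝ) (hlam : 0 < lam) (hβ : 0 ≤ β) :
    Tendsto (fun t : ℝ => frakB t lam 0 β / t - t * lam ^ 3 / (β + lam)) atTop
      (nhds (2 * β * lam ^ 2 / (β + lam) ^ 2)) := by
  obtain ⟨m, hm⟩ : ∃ m, m = lam + β := ⟨_, rfl⟩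
  have hm0 : 0 < m := by linarith
  obtain ⟨a, ha⟩ : ∃ a, a = lam ^ 2 / m := ⟨_, rfl⟩
  obtain ⟨b, hb⟩ : ∃ b, b = (4 * lam - 2 * a) / m := ⟨_, rfl⟩
  obtain ⟨c, hc⟩ : ∃ c, c = (2 - b) / m := ⟨_, rfl⟩
  obtain ⟨A, hA⟩ : ∃ A, A = a / lam := ⟨_, rfl⟩
  obtain ⟨B, hB⟩ : ∃ B, B = (b - 2 * A) / lam := ⟨_, rfl⟩
  obtain ⟨C, hC⟩ : ∃ C, C = (c - B) / lam := ⟨_, rfl⟩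
  have ea : m * a = lam ^ 2 := by rw [ha]; field_simp
  have eb : m * b + 2 * a = 4 * lam := by rw [hb]; field_simp; ring
  have ec : m * c + b = 2 := by rw [hc]; field_simp; ring
  have eA : lam * A = a := by rw [hA]; field_simp
  have eB : lam * B + 2 * A = b := by rw [hB]; field_simp; ring
  have eC : lam * C + B = c := by rw [hC]; field_simp; ring
  let K : ℝ → ℝ := fun t => ∫ y in (0:ℝ)..t, Real.exp (-(lam * y)) * Real.exp (-(m * (t - y)))
  have key : ∀ t, frakB t lam 0 β = lam ^ 2 *
      (A * t ^ 2 + B * t + C - C * Real.exp (-(lam * t)) - c * K t) := by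
    intro t
    unfold frakB
    congr 1
    have inner : ∀ T, ∫ v in (0:ℝ)..T,
        Real.exp (-((lam + β) * v)) * ((lam * (T - v) + 2) ^ 2 - 2) =
        a * T ^ 2 + b * T + c - c * Real.exp (-(m * T)) := by
      intro T
      rw [← int_aux, ea, eb, ec, ← hm]
      congr 1; ext v; ring
    simp_rw [inner]
    rw [← int_aux, eA, eB, eC, ← intervalIntegral.integral_const_mul,
      ← intervalIntegral.integral_sub (Continuous.intervalIntegrable (by fun_prop) _ _)
      (Continuous.intervalIntegrable (by fun_prop) _ _)]
    congr 1; ext y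
    rw [add_zero]; ring
  have hexp : Tendsto (fun t : ℝ => Real.exp (-(lam * t))) atTop (nhds 0) :=
    Real.tendsto_exp_neg_atTop_nhds_zero.comp (tendsto_id.const_mul_atTop hlam)
  have hK : Tendsto (fun t => K t / t) atTop (nhds 0) := by
    apply squeeze_zero_norm' _ hexp
    filter_upwards [eventually_gt_atTop 0] with t ht
    rw [norm_div, Real.norm_of_nonneg ht.le, div_le_iff₀ ht]
    have := intervalIntegral.norm_integral_le_of_norm_le_const (a := 0) (b := t)
      (f := fun y => Real.exp (-(lam * y)) * Real.exp (-(m * (t - y))))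
      (C := Real.exp (-(lam * t))) (by
        intro y hy
        rw [Set.uIoc_of_le ht.le] at hy
        rw [← Real.exp_add, Real.norm_of_nonneg (Real.exp_pos _).le, Real.exp_le_exp, hm]
        nlinarith [mul_nonneg hβ (sub_nonneg.2 hy.2)])
    rwa [sub_zero, abs_of_pos ht] at this
  have hinv : Tendsto (fun t : ℝ => t⁻¹) atTop (nhds 0) := tendsto_inv_atTop_zero
  have lim : Tendsto (fun t => lam ^ 2 * (B + C * t⁻¹ - C * (Real.exp (-(lam * t)) * t⁻¹)
      - c * (K t / t))) atTop
      (nhds (lam ^ 2 * (B + C * 0 - C * (0 * 0) - c * 0))) :=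
    ((((hinv.const_mul C).const_add B).sub ((hexp.mul hinv).const_mul C)).sub
      (hK.const_mul c)).const_mul _
  have hval : lam ^ 2 * (B + C * 0 - C * (0 * 0) - c * 0) = 2 * β * lam ^ 2 / (β + lam) ^ 2 := by
    have hβ' : β = m - lam := by linarith
    rw [hβ', sub_add_cancel, hB, hA, hb, ha]
    field_simp
    ring
  rw [← hval]
  refine lim.congr' ?_
  filter_upwards [eventually_gt_atTop 0] with t ht
  rw [key, add_comm β lam, ← hm]
  have hA' : lam ^ 3 / m = lam ^ 2 * A := by rw [hA, ha]; field_simp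
  rw [mul_div_assoc t, hA']
  field_simp
  ring
end

section
/- Let t ≥ 0, λ > 0, β ≥ 0 and let μℓ, μs be real numbers. Set m(v) := (1−exp(−βv))·μℓ + exp(−βv)·μs. Then λ²·∫₀ᵗ ∫₀^{t−y} exp(−λ(y+v))·m(y)·m(v)·((λ(t−y−v)+2)² − 2) dv dy = μℓ²·(B₀₀ − 2·B₀β + Bββ) + 2·μℓ·μs·(B₀β − Bββ) + μs²·Bββ, where B₀₀ := t²λ², B₀β := −2βλ²/(β+λ)³ + 2tβλ²/(β+λ)² + t²λ³/(β+λ) + (2βλ²/(β+λ)³)·exp(−t(β+λ)), and Bββ := 2βλ²(β−2λ)/(β+λ)⁴ + 4tβλ³/(β+λ)³ + t²λ⁴/(β+λ)² − (2βλ²·(−2λ + β·(1 + t(β+λ)))/(β+λ)⁴)·exp(−t(β+λ)). -/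
open MeasureTheory Real

lemma aux_J (a s k2 k1 k0 : ℝ) (ha : a ≠ 0) :
    ∫ v in (0:ℝ)..s, Real.exp (-(a * v)) * (k2 * (s - v) ^ 2 + k1 * (s - v) + k0)
      = k2 / a * s ^ 2 + (k1 / a - 2 * k2 / a ^ 2) * s
        + (k0 / a - k1 / a ^ 2 + 2 * k2 / a ^ 3)
        - (k0 / a - k1 / a ^ 2 + 2 * k2 / a ^ 3) * Real.exp (-(a * s)) := by
  have key : ∀ v ∈ Set.uIcc (0:ℝ) s, HasDerivAt (fun v => -(Real.exp (-(a * v)) *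
      (k2 / a * (s - v) ^ 2 + (k1 / a - 2 * k2 / a ^ 2) * (s - v)
        + (k0 / a - k1 / a ^ 2 + 2 * k2 / a ^ 3))))
      (Real.exp (-(a * v)) * (k2 * (s - v) ^ 2 + k1 * (s - v) + k0)) v := by
    intro v _
    have h1 : HasDerivAt (fun v : ℝ => Real.exp (-(a * v))) (Real.exp (-(a * v)) * (-(a * 1))) v :=
      ((hasDerivAt_id v).const_mul a).neg.exp
    have h2 : HasDerivAt (fun v : ℝ => s - v) (-1) v := (hasDerivAt_id v).const_sub s
    have h3 := (((h2.pow 2).const_mul (k2 / a)).add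
      (h2.const_mul (k1 / a - 2 * k2 / a ^ 2))).add_const (k0 / a - k1 / a ^ 2 + 2 * k2 / a ^ 3)
    refine ((h1.mul h3).neg).congr_deriv ?_
    simp only [Pi.add_apply, Pi.pow_apply]
    field_simp
    ring
  rw [intervalIntegral.integral_eq_sub_of_hasDerivAt key
    (Continuous.intervalIntegrable (by fun_prop) _ _)]
  simp
  ring

lemma aux_E (b t : ℝ) : ∫ y in (0:ℝ)..t, b * Real.exp (b * y) = Real.exp (b * t) - 1 := by
  have key : ∀ v ∈ Set.uIcc (0:ℝ) t, HasDerivAt (fun v => Real.exp (b * v))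
      (b * Real.exp (b * v)) v := by
    intro v _
    refine (((hasDerivAt_id v).const_mul b).exp).congr_deriv ?_
    simp
    ring
  rw [intervalIntegral.integral_eq_sub_of_hasDerivAt key
    (Continuous.intervalIntegrable (by fun_prop) _ _)]
  simp

theorem stmt_11 (t lam β μl μs : ℝ) (ht : 0 ≤ t) (hlam : 0 < lam) (hβ : 0 ≤ β)
    (m : ℝ → ℝ)
    (hm : ∀ v, m v = (1 - Real.exp (-(β * v))) * μl + Real.exp (-(β * v)) * μs)
    (B00 B0β Bββ : ℝ)
    (hB00 : B00 = t ^ 2 * lam ^ 2)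
    (hB0β : B0β = -(2 * β * lam ^ 2 / (β + lam) ^ 3)
        + 2 * t * β * lam ^ 2 / (β + lam) ^ 2
        + t ^ 2 * lam ^ 3 / (β + lam)
        + (2 * β * lam ^ 2 / (β + lam) ^ 3) * Real.exp (-(t * (β + lam))))
    (hBββ : Bββ = 2 * β * lam ^ 2 * (β - 2 * lam) / (β + lam) ^ 4
        + 4 * t * β * lam ^ 3 / (β + lam) ^ 3
        + t ^ 2 * lam ^ 4 / (β + lam) ^ 2
        - (2 * β * lam ^ 2 * (-(2 * lam) + β * (1 + t * (β + lam))) / (β + lam) ^ 4) *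
            Real.exp (-(t * (β + lam)))) :
    lam ^ 2 *
        ∫ y in (0:ℝ)..t,
          ∫ v in (0:ℝ)..(t - y),
            Real.exp (-(lam * (y + v))) * m y * m v * ((lam * (t - y - v) + 2) ^ 2 - 2)
      = μl ^ 2 * (B00 - 2 * B0β + Bββ) + 2 * μl * μs * (B0β - Bββ) + μs ^ 2 * Bββ := by
  have hc : 0 < β + lam := by linarith
  obtain ⟨c, hcdef⟩ : ∃ c, c = β + lam := ⟨_, rfl⟩
  have hc0 : c ≠ 0 := by rw [hcdef]; exact hc.ne'
  have hl0 : lam ≠ 0 := hlam.ne'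
  have hβc : β = c - lam := by linarith
  have hexp : ∀ v, Real.exp (-(c * v)) = Real.exp (-(lam * v)) * Real.exp (-(β * v)) := by
    intro v
    rw [← Real.exp_add, hcdef]
    congr 1
    ring
  -- inner integral
  have inner : ∀ y, (∫ v in (0:ℝ)..(t - y),
      Real.exp (-(lam * (y + v))) * m y * m v * ((lam * (t - y - v) + 2) ^ 2 - 2))
      = Real.exp (-(lam * y)) * m y * (μl * (lam * (t - y) ^ 2 + 2 * (t - y))
        + (μs - μl) * (lam ^ 2 / c * (t - y) ^ 2 + (4 * lam / c - 2 * lam ^ 2 / c ^ 2) * (t - y)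
          + 2 * β ^ 2 / c ^ 3 - 2 * β ^ 2 / c ^ 3 * Real.exp (-(c * (t - y))))) := by
    intro y
    have e1 : ∀ v, Real.exp (-(lam * (y + v))) * m y * m v * ((lam * (t - y - v) + 2) ^ 2 - 2)
        = Real.exp (-(lam * y)) * m y * μl * (Real.exp (-(lam * v)) *
            (lam ^ 2 * (t - y - v) ^ 2 + 4 * lam * (t - y - v) + 2))
          + Real.exp (-(lam * y)) * m y * (μs - μl) * (Real.exp (-(c * v)) *
            (lam ^ 2 * (t - y - v) ^ 2 + 4 * lam * (t - y - v) + 2)) := by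
      intro v
      have : Real.exp (-(lam * (y + v))) = Real.exp (-(lam * y)) * Real.exp (-(lam * v)) := by
        rw [← Real.exp_add]
        congr 1
        ring
      rw [this, hexp v, hm v]
      ring
    simp_rw [e1]
    rw [intervalIntegral.integral_add (Continuous.intervalIntegrable (by fun_prop) _ _)
      (Continuous.intervalIntegrable (by fun_prop) _ _),
      intervalIntegral.integral_const_mul, intervalIntegral.integral_const_mul,
      aux_J _ _ _ _ _ hl0, aux_J _ _ _ _ _ hc0, hβc]
    field_simp
    ring
  simp_rw [inner]
  have e2 : ∀ y, Real.exp (-(lam * y)) * m y * (μl * (lam * (t - y) ^ 2 + 2 * (t - y))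
        + (μs - μl) * (lam ^ 2 / c * (t - y) ^ 2 + (4 * lam / c - 2 * lam ^ 2 / c ^ 2) * (t - y)
          + 2 * β ^ 2 / c ^ 3 - 2 * β ^ 2 / c ^ 3 * Real.exp (-(c * (t - y)))))
      = μl * (Real.exp (-(lam * y)) *
          ((μl * lam + (μs - μl) * (lam ^ 2 / c)) * (t - y) ^ 2
          + (μl * 2 + (μs - μl) * (4 * lam / c - 2 * lam ^ 2 / c ^ 2)) * (t - y)
          + (μs - μl) * (2 * β ^ 2 / c ^ 3)))
        + (μs - μl) * (Real.exp (-(c * y)) *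
          ((μl * lam + (μs - μl) * (lam ^ 2 / c)) * (t - y) ^ 2
          + (μl * 2 + (μs - μl) * (4 * lam / c - 2 * lam ^ 2 / c ^ 2)) * (t - y)
          + (μs - μl) * (2 * β ^ 2 / c ^ 3)))
        + (-(μl * (μs - μl) * (2 * β / c ^ 3) * Real.exp (-(c * t)))) * (β * Real.exp (β * y))
        + (-((μs - μl) ^ 2 * (2 * β ^ 2 / c ^ 3) * Real.exp (-(c * t)))) := by
    intro y
    have h1 : Real.exp (-(c * (t - y)))
        = Real.exp (-(c * t)) * Real.exp (lam * y) * Real.exp (β * y) := by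
      rw [← Real.exp_add, ← Real.exp_add, hcdef]
      congr 1
      ring
    have h2 : Real.exp (lam * y) = (Real.exp (-(lam * y)))⁻¹ := by
      rw [← Real.exp_neg, neg_neg]
    have h3 : Real.exp (-(β * y)) = (Real.exp (β * y))⁻¹ := by
      rw [← Real.exp_neg]
    have h4 := (Real.exp_pos (-(lam * y))).ne'
    have h5 := (Real.exp_pos (β * y)).ne'
    rw [h1, h2, hexp y, hm y, h3]
    field_simp
    ring
  simp_rw [e2]
  rw [intervalIntegral.integral_add (Continuous.intervalIntegrable (by fun_prop) _ _)
      (Continuous.intervalIntegrable (by fun_prop) _ _),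
    intervalIntegral.integral_add (Continuous.intervalIntegrable (by fun_prop) _ _)
      (Continuous.intervalIntegrable (by fun_prop) _ _),
    intervalIntegral.integral_add (Continuous.intervalIntegrable (by fun_prop) _ _)
      (Continuous.intervalIntegrable (by fun_prop) _ _),
    intervalIntegral.integral_const_mul, intervalIntegral.integral_const_mul,
    intervalIntegral.integral_const_mul, intervalIntegral.integral_const,
    aux_J _ _ _ _ _ hl0, aux_J _ _ _ _ _ hc0, aux_E, hB00, hB0β, hBββ, ← hcdef, mul_comm t c]
  have hL : Real.exp (-(lam * t)) = Real.exp (-(c * t)) * Real.exp (β * t) := by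
    rw [← Real.exp_add, hcdef]
    congr 1
    ring
  rw [hL]
  generalize Real.exp (-(c * t)) = X
  generalize Real.exp (β * t) = Y
  rw [hβc]
  simp only [smul_eq_mul]
  field_simp
  ring
end

section
/- Let n and j be natural numbers with 3 ≤ j ≤ n, let t ≥ 0, and let f, g : ℝ → [0,∞] be Borel measurable. Then (n!/((j−3)!·(n−j)!)) · ∫₀ᵗ ∫ᵧᵗ ∫₀^{t−w} f(y)·g(v)·(w−y)^{j−3}·(t−w−v)^{n−j} dv dw dy = n·(n−1) · ∫₀ᵗ ∫₀^{t−y} f(y)·g(v)·(t−y−v)^{n−2} dv dy, where both sides are computed as Lebesgue integrals of nonnegative functions (values in [0,∞] allowed) and the middle integral on the left is over w ∈ [y,t]. -/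
open MeasureTheory Real ENNReal

lemma beta_aux (y c : ℝ) (b : ℕ) : ∀ a : ℕ,
    ((a + b + 1).factorial : ℝ) * ∫ w in y..c, (w - y) ^ a * (c - w) ^ b
      = a.factorial * b.factorial * (c - y) ^ (a + b + 1) := by
  induction b with
  | zero =>
    intro a
    have h : ∫ w in y..c, (w - y) ^ a * (c - w) ^ 0 = (c - y) ^ (a + 1) / (a + 1) := by
      have h' := intervalIntegral.integral_comp_sub_right (a := y) (b := c) (fun x : ℝ => x ^ a) y
      simp only [pow_zero, mul_one]
      rw [h', integral_pow]
      simp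
    rw [h]
    have : ((a : ℝ) + 1) ≠ 0 := by positivity
    simp only [add_zero, Nat.factorial_succ, Nat.factorial_zero]
    push_cast
    field_simp
  | succ b ih =>
    intro a
    have hc1 : Continuous fun w : ℝ => (a + 1 : ℝ) * ((w - y) ^ a * (c - w) ^ (b + 1)) := by
      fun_prop
    have hc2 : Continuous fun w : ℝ => (b + 1 : ℝ) * ((w - y) ^ (a + 1) * (c - w) ^ b) := by
      fun_prop
    have key : ∫ w in y..c, ((a + 1 : ℝ) * ((w - y) ^ a * (c - w) ^ (b + 1))
        - (b + 1 : ℝ) * ((w - y) ^ (a + 1) * (c - w) ^ b)) =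
        (c - y) ^ (a + 1) * (c - c) ^ (b + 1) - (y - y) ^ (a + 1) * (c - y) ^ (b + 1) := by
      apply intervalIntegral.integral_eq_sub_of_hasDerivAt
        (f := fun w : ℝ => (w - y) ^ (a + 1) * (c - w) ^ (b + 1))
      · intro x _
        have h1 := ((hasDerivAt_id x).sub_const y).pow (a + 1)
        have h2 := ((hasDerivAt_id x).const_sub c).pow (b + 1)
        refine (h1.mul h2).congr_deriv ?_
        simp
        ring
      · exact (hc1.sub hc2).intervalIntegrable _ _
    rw [intervalIntegral.integral_sub (hc1.intervalIntegrable _ _) (hc2.intervalIntegrable _ _),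
      intervalIntegral.integral_const_mul, intervalIntegral.integral_const_mul] at key
    simp only [sub_self, zero_pow (Nat.succ_ne_zero _), mul_zero, zero_mul] at key
    have h := ih (a + 1)
    have e : a + 1 + b + 1 = a + (b + 1) + 1 := by ring
    rw [e] at h
    have ha : ((a : ℝ) + 1) ≠ 0 := by positivity
    apply mul_left_cancel₀ ha
    rw [Nat.factorial_succ a] at h
    rw [Nat.factorial_succ b]
    push_cast at h ⊢
    linear_combination ((a + (b + 1) + 1).factorial : ℝ) * key + (b + 1 : ℝ) * h

lemma beta_lintegral (y c : ℝ) (hyc : y ≤ c) (a b : ℕ) :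
    ∫⁻ w in Set.Ioc y c, ENNReal.ofReal ((w - y) ^ a * (c - w) ^ b)
      = ENNReal.ofReal (a.factorial * b.factorial / (a + b + 1).factorial) *
        ENNReal.ofReal ((c - y) ^ (a + b + 1)) := by
  have hc : Continuous fun w : ℝ => (w - y) ^ a * (c - w) ^ b := by fun_prop
  rw [← ofReal_integral_eq_lintegral_ofReal, ← intervalIntegral.integral_of_le hyc,
    ← ENNReal.ofReal_mul (by positivity)]
  · congr 1
    have := beta_aux y c b a
    have h0 : ((a + b + 1).factorial : ℝ) ≠ 0 := by positivity
    field_simp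
    linarith
  · exact (hc.integrableOn_Icc).mono_set Set.Ioc_subset_Icc_self
  · refine (ae_restrict_iff' measurableSet_Ioc).2 (ae_of_all _ fun w hw => ?_)
    have h1 : 0 ≤ w - y := by linarith [hw.1]
    have h2 : 0 ≤ c - w := by linarith [hw.2]
    simp only [Pi.zero_apply]
    positivity

lemma swap_aux (y t : ℝ) (F : ℝ → ℝ → ℝ≥0∞) (hF : Measurable (Function.uncurry F)) :
    ∫⁻ w in Set.Ioc y t, ∫⁻ v in Set.Ioc (0:ℝ) (t - w), F w v
      = ∫⁻ v in Set.Ioc (0:ℝ) (t - y), ∫⁻ w in Set.Ioc y (t - v), F w v := by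
  let S : Set (ℝ × ℝ) := {p | y < p.1 ∧ 0 < p.2 ∧ p.1 + p.2 ≤ t}
  have hS : MeasurableSet S := by
    refine (measurableSet_lt measurable_const measurable_fst).inter
      ((measurableSet_lt measurable_const measurable_snd).inter
      (measurableSet_le (measurable_fst.add measurable_snd) measurable_const))
  have hm : Measurable (S.indicator (Function.uncurry F)) := hF.indicator hS
  have h1 : ∫⁻ w in Set.Ioc y t, ∫⁻ v in Set.Ioc (0:ℝ) (t - w), F w v
      = ∫⁻ w, ∫⁻ v, S.indicator (Function.uncurry F) (w, v) := by
    rw [← lintegral_indicator measurableSet_Ioc]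
    refine lintegral_congr fun w => ?_
    by_cases hw : w ∈ Set.Ioc y t
    · rw [Set.indicator_of_mem hw, ← lintegral_indicator measurableSet_Ioc]
      refine lintegral_congr fun v => ?_
      have : v ∈ Set.Ioc 0 (t - w) ↔ (w, v) ∈ S := by
        simp only [S, Set.mem_Ioc, Set.mem_ofPred_eq] at *
        constructor
        · rintro ⟨_, _⟩; exact ⟨hw.1, by assumption, by linarith⟩
        · rintro ⟨_, _, _⟩; exact ⟨by assumption, by linarith⟩
      simp only [Set.indicator, this, Function.uncurry]
      congr
    · rw [Set.indicator_of_notMem hw]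
      symm
      rw [lintegral_eq_zero_of_ae_eq_zero]
      refine ae_of_all _ fun v => Set.indicator_of_notMem ?_ _
      rintro ⟨h1, h2, h3⟩
      exact hw ⟨h1, by simp only at *; linarith⟩
  have h2 : ∫⁻ v in Set.Ioc (0:ℝ) (t - y), ∫⁻ w in Set.Ioc y (t - v), F w v
      = ∫⁻ v, ∫⁻ w, S.indicator (Function.uncurry F) (w, v) := by
    rw [← lintegral_indicator measurableSet_Ioc]
    refine lintegral_congr fun v => ?_
    by_cases hv : v ∈ Set.Ioc 0 (t - y)
    · rw [Set.indicator_of_mem hv, ← lintegral_indicator measurableSet_Ioc]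
      refine lintegral_congr fun w => ?_
      have : w ∈ Set.Ioc y (t - v) ↔ (w, v) ∈ S := by
        simp only [S, Set.mem_Ioc, Set.mem_ofPred_eq] at *
        constructor
        · rintro ⟨_, _⟩; exact ⟨by assumption, hv.1, by linarith⟩
        · rintro ⟨_, _, _⟩; exact ⟨by assumption, by linarith⟩
      simp only [Set.indicator, this, Function.uncurry]
      congr
    · rw [Set.indicator_of_notMem hv]
      symm
      rw [lintegral_eq_zero_of_ae_eq_zero]
      refine ae_of_all _ fun w => Set.indicator_of_notMem ?_ _
      rintro ⟨h1, h2, h3⟩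
      exact hv ⟨h2, by simp only at *; linarith⟩
  rw [h1, h2]
  exact lintegral_lintegral_swap (f := fun w v => S.indicator (Function.uncurry F) (w, v))
    hm.aemeasurable

theorem stmt_16 (n j : ℕ) (hj : 3 ≤ j) (hjn : j ≤ n) (t : ℝ) (ht : 0 ≤ t)
    (f g : ℝ → ℝ≥0∞) (hf : Measurable f) (hg : Measurable g) :
    ((n.factorial : ℝ≥0∞) / ((j - 3).factorial * (n - j).factorial)) *
        ∫⁻ y in Set.Ioc (0:ℝ) t,
          ∫⁻ w in Set.Ioc y t,
            ∫⁻ v in Set.Ioc (0:ℝ) (t - w),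
              f y * g v * ENNReal.ofReal ((w - y) ^ (j - 3) * (t - w - v) ^ (n - j))
      = (n : ℝ≥0∞) * (n - 1 : ℕ) *
          ∫⁻ y in Set.Ioc (0:ℝ) t,
            ∫⁻ v in Set.Ioc (0:ℝ) (t - y),
              f y * g v * ENNReal.ofReal ((t - y - v) ^ (n - 2)) := by
  obtain ⟨a, rfl⟩ := Nat.exists_eq_add_of_le hj
  obtain ⟨b, rfl⟩ := Nat.exists_eq_add_of_le hjn
  have e1 : 3 + a - 3 = a := by omega
  have e2 : 3 + a + b - (3 + a) = b := by omega
  have e3 : 3 + a + b - 2 = a + b + 1 := by omega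
  have e4 : 3 + a + b - 1 = a + b + 2 := by omega
  have e5 : 3 + a + b = a + b + 3 := by omega
  rw [e1, e2, e3, e4, e5]
  set C : ℝ≥0∞ := ENNReal.ofReal (a.factorial * b.factorial / (a + b + 1).factorial) with hC
  have hCt : C ≠ ∞ := ENNReal.ofReal_ne_top
  have inner : ∀ y : ℝ,
      ∫⁻ w in Set.Ioc y t, ∫⁻ v in Set.Ioc (0:ℝ) (t - w),
          f y * g v * ENNReal.ofReal ((w - y) ^ a * (t - w - v) ^ b)
      = C * ∫⁻ v in Set.Ioc (0:ℝ) (t - y),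
          f y * g v * ENNReal.ofReal ((t - y - v) ^ (a + b + 1)) := by
    intro y
    rw [swap_aux y t (fun w v => f y * g v * ENNReal.ofReal ((w - y) ^ a * (t - w - v) ^ b))
      (by unfold Function.uncurry; fun_prop), ← lintegral_const_mul' _ _ hCt]
    refine setLIntegral_congr_fun measurableSet_Ioc fun v hv => ?_
    rw [lintegral_const_mul _ (by fun_prop)]
    have := beta_lintegral y (t - v) (by linarith [hv.2]) a b
    simp only [sub_right_comm t _ v] at this ⊢
    rw [this, ← hC]
    ring
  simp_rw [inner]
  rw [lintegral_const_mul' _ _ hCt, ← mul_assoc]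
  congr 1
  have hN : ((a + b + 3).factorial : ℝ≥0∞) / (a.factorial * b.factorial)
      = ENNReal.ofReal ((a + b + 3).factorial / (a.factorial * b.factorial)) := by
    rw [ENNReal.ofReal_div_of_pos (by positivity), ENNReal.ofReal_mul (by positivity)]
    simp only [ENNReal.ofReal_natCast]
  rw [hN, hC, ← ENNReal.ofReal_mul (by positivity), ← ENNReal.ofReal_natCast,
    ← ENNReal.ofReal_natCast, ← ENNReal.ofReal_mul (by positivity)]
  congr 1
  rw [Nat.factorial_succ (a + b + 2), Nat.factorial_succ (a + b + 1)]
  push_cast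
  field_simp
  try ring
end

section
/- Let n, i, j be natural numbers with 2 ≤ i, i+2 ≤ j ≤ n, let t ≥ 0, and let f, g : ℝ → [0,∞] be Borel measurable. Then (n!/((i−2)!·(j−i−2)!·(n−j)!)) · ∫₀ᵗ ∫₀^{t−x} ∫_{x+u}^{t} ∫₀^{t−w} f(u)·g(v)·x^{i−2}·(w−x−u)^{j−i−2}·(t−w−v)^{n−j} dv dw du dx = n·(n−1) · ∫₀ᵗ ∫₀^{t−u} f(u)·g(v)·(t−u−v)^{n−2} dv du, where both sides are computed as Lebesgue integrals of nonnegative functions (values in [0,∞] allowed) and the third integral on the left is over w ∈ [x+u, t]. -/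
open MeasureTheory Real ENNReal

lemma aux_beta (a : ℕ) : ∀ (b : ℕ) (s : ℝ),
    ∫ x in (0:ℝ)..s, (x ^ a / a.factorial) * ((s - x) ^ b / b.factorial)
      = s ^ (a + b + 1) / (a + b + 1).factorial := by
  have hd : ∀ (b : ℕ) (s x : ℝ), HasDerivAt
      (fun x : ℝ => - ((s - x) ^ (b + 1) / (b + 1).factorial)) ((s - x) ^ b / b.factorial) x := by
    intro b s x
    have h := ((((hasDerivAt_id x).const_sub s).pow (b + 1)).div_const
      ((b + 1).factorial : ℝ)).neg
    refine h.congr_deriv ?_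
    have : (b.factorial : ℝ) ≠ 0 := by positivity
    have : (b : ℝ) + 1 ≠ 0 := by positivity
    simp only [Nat.factorial_succ, id, Nat.add_sub_cancel]
    push_cast
    field_simp
  have hc : ∀ (a : ℕ) (x : ℝ), HasDerivAt
      (fun x : ℝ => x ^ (a + 1) / (a + 1).factorial) (x ^ a / a.factorial) x := by
    intro a x
    refine ((hasDerivAt_pow (a + 1) x).div_const _).congr_deriv ?_
    have : (a.factorial : ℝ) ≠ 0 := by positivity
    have : (a : ℝ) + 1 ≠ 0 := by positivity
    simp only [Nat.factorial_succ, Nat.add_sub_cancel]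
    push_cast
    field_simp
  induction a with
  | zero =>
    intro b s
    simp only [pow_zero, Nat.factorial_zero, Nat.cast_one, div_one, one_mul, Nat.zero_add]
    rw [intervalIntegral.integral_eq_sub_of_hasDerivAt (fun x _ => hd b s x)
      (by apply Continuous.intervalIntegrable; fun_prop)]
    simp
  | succ a ih =>
    intro b s
    rw [intervalIntegral.integral_mul_deriv_eq_deriv_mul (fun x _ => hc a x) (fun x _ => hd b s x)
      (by apply Continuous.intervalIntegrable; fun_prop)
      (by apply Continuous.intervalIntegrable; fun_prop)]
    have := ih (b + 1) s
    simp only [mul_neg, intervalIntegral.integral_neg, this]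
    simp only [sub_self, ne_eq, Nat.add_eq_zero_iff, one_ne_zero, and_false, not_false_eq_true,
      zero_pow, zero_div, mul_zero, zero_mul]
    rw [show a + (b + 1) + 1 = a + 1 + b + 1 by ring]
    simp

/-- truncated power, strict -/
noncomputable def auxP (a : ℕ) (s : ℝ) : ℝ≥0∞ :=
  (Set.Ioi (0:ℝ)).indicator (fun s => ENNReal.ofReal (s ^ a / a.factorial)) s

/-- truncated power, non-strict -/
noncomputable def auxQ (a : ℕ) (s : ℝ) : ℝ≥0∞ :=
  (Set.Ici (0:ℝ)).indicator (fun s => ENNReal.ofReal (s ^ a / a.factorial)) s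

@[fun_prop]
lemma auxP_meas (a : ℕ) : Measurable (auxP a) := by
  unfold auxP
  exact Measurable.indicator (by fun_prop) measurableSet_Ioi

@[fun_prop]
lemma auxQ_meas (a : ℕ) : Measurable (auxQ a) := by
  unfold auxQ
  exact Measurable.indicator (by fun_prop) measurableSet_Ici

lemma aux_conv (a b : ℕ) (s : ℝ) :
    ∫⁻ x, auxP a x * auxQ b (s - x) = auxQ (a + b + 1) s := by
  have h1 : ∀ x, auxP a x * auxQ b (s - x) = (Set.Ioc 0 s).indicator (fun x =>
      ENNReal.ofReal ((x ^ a / a.factorial) * ((s - x) ^ b / b.factorial))) x := by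
    intro x
    simp only [auxP, auxQ, Set.indicator_apply, Set.mem_Ioi, Set.mem_Ici, Set.mem_Ioc, sub_nonneg]
    by_cases h : 0 < x
    · by_cases h' : x ≤ s
      · simp only [h, h', and_self, if_true]
        rw [ENNReal.ofReal_mul (by positivity)]
      · simp [h']
    · simp [h]
  simp_rw [h1]
  rw [lintegral_indicator measurableSet_Ioc]
  by_cases hs : 0 ≤ s
  · rw [← ofReal_integral_eq_lintegral_ofReal, ← intervalIntegral.integral_of_le hs, aux_beta]
    · simp [auxQ, hs]
    · exact (Continuous.integrableOn_Ioc (by fun_prop))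
    · refine (ae_restrict_iff' measurableSet_Ioc).2 (Filter.Eventually.of_forall ?_)
      rintro x ⟨hx, hx'⟩
      have : 0 ≤ s - x := by linarith
      show (0:ℝ) ≤ _
      positivity
  · rw [Set.Ioc_eq_empty (by linarith)]
    simp [auxQ, hs]

lemma aux_conv2 (b c : ℕ) (y z : ℝ) :
    ∫⁻ w, auxP b (w - y) * auxQ c (z - w) = auxQ (b + c + 1) (z - y) := by
  rw [← aux_conv, ← lintegral_sub_right_eq_self (fun x => auxP b x * auxQ c (z - y - x)) y]
  refine lintegral_congr fun w => ?_
  rw [show z - y - (w - y) = z - w by ring]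

lemma aux_left (a b c : ℕ) (t : ℝ) (f g : ℝ → ℝ≥0∞) (hf : Measurable f) (hg : Measurable g) :
    ∫⁻ x, ∫⁻ u, ∫⁻ w, ∫⁻ v, f u * g v * (auxP a x * auxP b (w - (x + u)) * auxQ c (t - v - w))
     = ∫⁻ u, ∫⁻ v, f u * g v * auxQ (a + b + c + 2) (t - u - v) := by
  have h1 : ∀ x u, ∫⁻ w, ∫⁻ v, f u * g v * (auxP a x * auxP b (w - (x + u)) * auxQ c (t - v - w))
      = ∫⁻ v, f u * g v * (auxP a x * auxQ (b + c + 1) (t - u - v - x)) := by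
    intro x u
    rw [lintegral_lintegral_swap (by unfold Function.uncurry; fun_prop)]
    refine lintegral_congr fun v => ?_
    simp_rw [mul_assoc (auxP a x)]
    simp_rw [← mul_assoc (f u * g v)]
    rw [lintegral_const_mul _ (by fun_prop), aux_conv2]
    rw [show t - v - (x + u) = t - u - v - x by ring]
  simp_rw [h1]
  rw [lintegral_lintegral_swap]
  · refine lintegral_congr fun u => ?_
    rw [lintegral_lintegral_swap (by unfold Function.uncurry; fun_prop)]
    refine lintegral_congr fun v => ?_
    rw [lintegral_const_mul _ (by fun_prop), aux_conv]
    rw [show a + (b + c + 1) + 1 = a + b + c + 2 by ring]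
  · refine Measurable.aemeasurable ?_
    exact Measurable.lintegral_prod_right' (f := fun p : (ℝ × ℝ) × ℝ =>
      f p.1.2 * g p.2 * (auxP a p.1.1 * auxQ (b + c + 1) (t - p.1.2 - p.2 - p.1.1)))
      (by fun_prop)

lemma aux_fact (a : ℕ) (s : ℝ) :
    ENNReal.ofReal (s ^ a) = a.factorial * ENNReal.ofReal (s ^ a / a.factorial) := by
  rw [← ENNReal.ofReal_natCast, ← ENNReal.ofReal_mul (by positivity)]
  congr 1
  field_simp

theorem stmt_17 (n i j : ℕ) (hi : 2 ≤ i) (hij : i + 2 ≤ j) (hjn : j ≤ n)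
    (t : ℝ) (ht : 0 ≤ t)
    (f g : ℝ → ℝ≥0∞) (hf : Measurable f) (hg : Measurable g) :
    ((n.factorial : ℝ≥0∞) /
        ((i - 2).factorial * (j - i - 2).factorial * (n - j).factorial)) *
        ∫⁻ x in Set.Ioc (0:ℝ) t,
          ∫⁻ u in Set.Ioc (0:ℝ) (t - x),
            ∫⁻ w in Set.Ioc (x + u) t,
              ∫⁻ v in Set.Ioc (0:ℝ) (t - w),
                f u * g v *
                  ENNReal.ofReal
                    (x ^ (i - 2) * (w - x - u) ^ (j - i - 2) * (t - w - v) ^ (n - j))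
      = (n : ℝ≥0∞) * (n - 1 : ℕ) *
          ∫⁻ u in Set.Ioc (0:ℝ) t,
            ∫⁻ v in Set.Ioc (0:ℝ) (t - u),
              f u * g v * ENNReal.ofReal ((t - u - v) ^ (n - 2)) := by
  set F := (Set.Ioi (0:ℝ)).indicator f with hF
  set G := (Set.Ioi (0:ℝ)).indicator g with hG
  have hFm : Measurable F := hf.indicator measurableSet_Ioi
  have hGm : Measurable G := hg.indicator measurableSet_Ioi
  obtain ⟨a, rfl⟩ : ∃ a, i = a + 2 := ⟨i - 2, by omega⟩
  obtain ⟨b, rfl⟩ : ∃ b, j = a + 2 + 2 + b := ⟨j - (a + 2 + 2), by omega⟩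
  obtain ⟨c, rfl⟩ : ∃ c, n = a + 2 + 2 + b + c := ⟨n - (a + 2 + 2 + b), by omega⟩
  have e1 : a + 2 - 2 = a := by omega
  have e2 : a + 2 + 2 + b - (a + 2) - 2 = b := by omega
  have e3 : a + 2 + 2 + b + c - (a + 2 + 2 + b) = c := by omega
  have e4 : a + 2 + 2 + b + c - 2 = a + b + c + 2 := by omega
  have e5 : a + 2 + 2 + b + c - 1 = a + b + c + 2 + 1 := by omega
  have e6 : a + 2 + 2 + b + c = a + b + c + 2 + 1 + 1 := by omega
  rw [e1, e2, e3, e4, e5, e6]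
  have hR : ∫⁻ u in Set.Ioc (0:ℝ) t, ∫⁻ v in Set.Ioc (0:ℝ) (t - u),
        f u * g v * ENNReal.ofReal ((t - u - v) ^ (a + b + c + 2))
      = (a + b + c + 2).factorial *
        ∫⁻ u, ∫⁻ v, F u * G v * auxQ (a + b + c + 2) (t - u - v) := by
    rw [← lintegral_const_mul' _ _ (by simp), ← lintegral_indicator measurableSet_Ioc]
    refine lintegral_congr fun u => ?_
    rw [← lintegral_const_mul' _ _ (by simp)]
    rw [Set.indicator_apply]
    split_ifs with hu
    · rw [← lintegral_indicator measurableSet_Ioc]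
      refine lintegral_congr fun v => ?_
      simp only [hF, hG, auxQ, Set.indicator_apply, Set.mem_Ioi, Set.mem_Ici, Set.mem_Ioc]
      rw [aux_fact]
      by_cases hv : 0 < v
      · by_cases h : v ≤ t - u
        · simp only [hu.1, hv, h, and_self, if_true, sub_nonneg]
          ring
        · simp [h]
      · simp [hv]
    · symm
      rw [lintegral_eq_zero_iff' (by fun_prop)]
      refine Filter.Eventually.of_forall fun v => ?_
      simp only [hF, hG, auxQ, Set.indicator_apply, Set.mem_Ioi, Set.mem_Ici, Pi.zero_apply]
      by_cases h1 : 0 < u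
      · by_cases hv : 0 < v
        · have : ¬ (0 ≤ t - u - v) := fun h => hu ⟨h1, by linarith⟩
          simp [this]
        · simp [hv]
      · simp [h1]
  have hL : ∫⁻ x in Set.Ioc (0:ℝ) t,
          ∫⁻ u in Set.Ioc (0:ℝ) (t - x),
            ∫⁻ w in Set.Ioc (x + u) t,
              ∫⁻ v in Set.Ioc (0:ℝ) (t - w),
                f u * g v *
                  ENNReal.ofReal (x ^ a * (w - x - u) ^ b * (t - w - v) ^ c)
      = ((a.factorial : ℝ≥0∞) * b.factorial * c.factorial) *
       ∫⁻ x, ∫⁻ u, ∫⁻ w, ∫⁻ v,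
        F u * G v * (auxP a x * auxP b (w - (x + u)) * auxQ c (t - v - w)) := by
    have hK : (a.factorial : ℝ≥0∞) * b.factorial * c.factorial ≠ ∞ := by
      finiteness
    set K := (a.factorial : ℝ≥0∞) * b.factorial * c.factorial with hKd
    -- the integrand vanishes off the domain
    have hz : ∀ x u w v, ¬ (0 < x ∧ 0 < u ∧ x + u < w ∧ 0 < v ∧ v ≤ t - w) →
        F u * G v * (auxP a x * auxP b (w - (x + u)) * auxQ c (t - v - w)) = 0 := by
      intro x u w v h
      by_contra hne
      simp only [mul_eq_zero, not_or] at hne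
      obtain ⟨⟨h1, h2⟩, ⟨h3, h4⟩, h5⟩ := hne
      have h1 := Set.mem_of_indicator_ne_zero h1
      have h2 := Set.mem_of_indicator_ne_zero h2
      have h3 := Set.mem_of_indicator_ne_zero h3
      have h4 := Set.mem_of_indicator_ne_zero h4
      have h5 := Set.mem_of_indicator_ne_zero h5
      simp only [Set.mem_Ioi, Set.mem_Ici] at h1 h2 h3 h4 h5
      exact h ⟨h3, h1, by linarith, h2, by linarith⟩
    rw [← lintegral_const_mul' _ _ hK, ← lintegral_indicator measurableSet_Ioc]
    refine lintegral_congr fun x => ?_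
    rw [Set.indicator_apply]
    split_ifs with hx
    swap
    · have : ∀ u w v, F u * G v * (auxP a x * auxP b (w - (x + u)) * auxQ c (t - v - w)) = 0 :=
        fun u w v => hz _ _ _ _ fun h => hx ⟨h.1, by linarith [h.2.1, h.2.2.1, h.2.2.2.1, h.2.2.2.2]⟩
      simp [this]
    rw [← lintegral_const_mul' _ _ hK, ← lintegral_indicator measurableSet_Ioc]
    refine lintegral_congr fun u => ?_
    rw [Set.indicator_apply]
    split_ifs with hu
    swap
    · have : ∀ w v, F u * G v * (auxP a x * auxP b (w - (x + u)) * auxQ c (t - v - w)) = 0 :=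
        fun w v => hz _ _ _ _ fun h =>
          hu ⟨h.2.1, by linarith [h.2.1, h.2.2.1, h.2.2.2.1, h.2.2.2.2]⟩
      simp [this]
    rw [← lintegral_const_mul' _ _ hK, ← lintegral_indicator measurableSet_Ioc]
    refine lintegral_congr fun w => ?_
    rw [Set.indicator_apply]
    split_ifs with hw
    swap
    · have : ∀ v, F u * G v * (auxP a x * auxP b (w - (x + u)) * auxQ c (t - v - w)) = 0 :=
        fun v => hz _ _ _ _ fun h =>
          hw ⟨h.2.2.1, by linarith [h.2.1, h.2.2.1, h.2.2.2.1, h.2.2.2.2]⟩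
      simp [this]
    rw [← lintegral_const_mul' _ _ hK, ← lintegral_indicator measurableSet_Ioc]
    refine lintegral_congr fun v => ?_
    rw [Set.indicator_apply]
    split_ifs with hv
    swap
    · rw [hz _ _ _ _ fun h => hv h.2.2.2, mul_zero]
    have q1 : 0 < x := hx.1
    have q2 : 0 < u := hu.1
    have q3 : 0 < w - (x + u) := by linarith [hw.1]
    have q4 : 0 < v := hv.1
    have q5 : 0 ≤ t - v - w := by linarith [hv.2]
    rw [show w - x - u = w - (x + u) by ring, show t - w - v = t - v - w by ring]
    rw [ENNReal.ofReal_mul (by positivity), ENNReal.ofReal_mul (by positivity),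
      aux_fact a, aux_fact b, aux_fact c]
    simp only [hF, hG, auxP, auxQ, Set.indicator_apply, Set.mem_Ioi, Set.mem_Ici, q1, q2, q3, q4,
      q5, if_true, hKd]
    ring
  rw [hL, hR, aux_left a b c t F G hFm hGm]
  generalize (∫⁻ u, ∫⁻ v, F u * G v * auxQ (a + b + c + 2) (t - u - v)) = I
  rw [← mul_assoc (_ / _), ← mul_assoc _ _ I]
  congr 1
  rw [ENNReal.div_mul_cancel (by simp [Nat.factorial_ne_zero]) (by finiteness)]
  rw [Nat.factorial_succ, Nat.factorial_succ (a + b + c + 2)]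
  push_cast
  ring
end

section
/- Let L be a Borel probability measure on (0,∞), let t > 0, and for each natural number i ≥ 1 let Δᵢ : ℝ → [0,∞] be Borel measurable. For each n ≥ 0 set π_{t,n} := ∫ ((λt)ⁿ/n!)·exp(−λt) dL(λ). Then ∑_{n=1}^{∞} π_{t,n} · (n/tⁿ) · ∫₀ᵗ ( ∑_{i=1}^{n} Δᵢ(v) ) · (t−v)^{n−1} dv = ∫_{(0,∞)} ∫₀ᵗ λ·exp(−λv) · ( ∑_{n=0}^{∞} exp(−λ(t−v))·((λ(t−v))ⁿ/n!) · ∑_{i=1}^{n+1} Δᵢ(v) ) dv dL(λ), where both sides are computed in [0,∞] (Lebesgue integrals and sums of nonnegative terms). -/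
open MeasureTheory Real ENNReal

theorem stmt_19 (L : Measure ℝ) [IsProbabilityMeasure L] (hsupp : L (Set.Iic 0) = 0)
    (t : ℝ) (ht : 0 < t)
    (Δ : ℕ → ℝ → ℝ≥0∞) (hΔ : ∀ i, Measurable (Δ i)) :
    ∑' n : ℕ,
        (∫⁻ lam in Set.Ioi (0:ℝ),
            ENNReal.ofReal ((lam * t) ^ n / n.factorial * Real.exp (-(lam * t))) ∂L) *
          ((n : ℝ≥0∞) / ENNReal.ofReal (t ^ n)) *
          ∫⁻ v in Set.Ioc (0:ℝ) t,
            (∑ i ∈ Finset.Icc 1 n, Δ i v) * ENNReal.ofReal ((t - v) ^ (n - 1))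
      = ∫⁻ lam in Set.Ioi (0:ℝ),
          (∫⁻ v in Set.Ioc (0:ℝ) t,
            ENNReal.ofReal (lam * Real.exp (-(lam * v))) *
              ∑' n : ℕ,
                ENNReal.ofReal
                    (Real.exp (-(lam * (t - v))) * (lam * (t - v)) ^ n / n.factorial) *
                  ∑ i ∈ Finset.Icc 1 (n + 1), Δ i v) ∂L := by
  have hg : ∀ n : ℕ, Measurable (fun v : ℝ =>
      (∑ i ∈ Finset.Icc 1 (n + 1), Δ i v) * ENNReal.ofReal ((t - v) ^ n)) := by
    intro n
    exact (Finset.measurable_fun_sum _ (fun i _ => hΔ i)).mul (by fun_prop)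
  have hc : ∀ n : ℕ, Measurable (fun lam : ℝ =>
      ENNReal.ofReal (lam ^ (n + 1) / n.factorial * Real.exp (-(lam * t)))) := by
    intro n
    fun_prop
  have hR : ∀ lam ∈ Set.Ioi (0:ℝ),
      (∫⁻ v in Set.Ioc (0:ℝ) t,
            ENNReal.ofReal (lam * Real.exp (-(lam * v))) *
              ∑' n : ℕ,
                ENNReal.ofReal
                    (Real.exp (-(lam * (t - v))) * (lam * (t - v)) ^ n / n.factorial) *
                  ∑ i ∈ Finset.Icc 1 (n + 1), Δ i v)
      = ∑' n : ℕ, ENNReal.ofReal (lam ^ (n + 1) / n.factorial * Real.exp (-(lam * t))) *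
          ∫⁻ v in Set.Ioc (0:ℝ) t,
            (∑ i ∈ Finset.Icc 1 (n + 1), Δ i v) * ENNReal.ofReal ((t - v) ^ n) := by
    intro lam hlam
    have hlam : 0 < lam := hlam
    simp_rw [← lintegral_const_mul _ (hg _)]
    rw [← lintegral_tsum (fun n => ((hg n).const_mul _).aemeasurable)]
    refine setLIntegral_congr_fun measurableSet_Ioc ?_
    intro v hv
    simp only
    rw [← ENNReal.tsum_mul_left]
    refine tsum_congr fun n => ?_
    rw [mul_comm (∑ i ∈ Finset.Icc 1 (n + 1), Δ i v), ← mul_assoc, ← mul_assoc,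
      ← ENNReal.ofReal_mul (by positivity), ← ENNReal.ofReal_mul (by positivity)]
    congr 2
    have : -(lam * t) = -(lam * v) + -(lam * (t - v)) := by ring
    rw [this, Real.exp_add, mul_pow]
    ring
  rw [setLIntegral_congr_fun measurableSet_Ioi hR,
    lintegral_tsum (fun n => ((hc n).mul_const _).aemeasurable),
    tsum_eq_zero_add' ENNReal.summable]
  simp only [Nat.cast_zero, ENNReal.zero_div, mul_zero, zero_mul, zero_add]
  refine tsum_congr fun n => ?_
  rw [lintegral_mul_const _ (hc n)]
  simp only [Nat.add_sub_cancel]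
  congr 1
  rw [← lintegral_mul_const _ (by fun_prop)]
  refine setLIntegral_congr_fun measurableSet_Ioi ?_
  intro lam hlam
  have hlam : 0 < lam := hlam
  simp only
  rw [← ENNReal.ofReal_natCast, ← ENNReal.ofReal_div_of_pos (by positivity),
    ← ENNReal.ofReal_mul (by positivity)]
  congr 1
  rw [Nat.factorial_succ, mul_pow]
  push_cast
  field_simp
end
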